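/- There exists ε ∈ (0,1) such that for every even n ≥ 2 the following holds for the Pauli agreement game: let P(f,g) be the probability—where w is chosen uniformly from L^n_1 and then (x,y) is chosen uniformly among pairs of maximal isotropic subspaces with w ⊆ x and w ⊆ y—that the outcomes f_x and g_y agree on the nonzero vector of w. Then the maximum of P(f,g) over all pairs of outcome families (f_x)_{x∈L^n_n}, (g_x)_{x∈L^n_n} lies between 1/2 and 1/2 + ε^n. -/

import Mathlib

open Finset

abbrev F2 := ZMod 2
/-- `F2^{2n}`, split into the first and last `n` coordinates. -/
abbrev PV (n : ℕ) := (Fin n → F2) × (Fin n → F2)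

/-- Symplectic product on `F2^{2n}`: zero iff `a₁·b₂ = a₂·b₁`. -/
def symp {n : ℕ} (a b : PV n) : F2 :=
  (∑ i, a.1 i * b.2 i) + (∑ i, a.2 i * b.1 i)

/-- A subspace is isotropic if the symplectic product vanishes on it. -/
def IsIsotropic {n : ℕ} (S : Submodule F2 (PV n)) : Prop :=
  ∀ x ∈ S, ∀ y ∈ S, symp x y = 0

/-- `Lset n k` = `L^n_k`, the set of `k`-dimensional isotropic subspaces of `F2^{2n}`. -/
def Lset (n k : ℕ) : Set (Submodule F2 (PV n)) :=
  {S | IsIsotropic S ∧ Module.finrank F2 S = k}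

/-- Integer lift of a vector over `F2`, with values in `{0,1} ⊆ ℤ`. -/
def liftZ {n : ℕ} (v : Fin n → F2) : Fin n → ℤ := fun i => ((v i).val : ℤ)

def dotZ {n : ℕ} (a b : Fin n → ℤ) : ℤ := ∑ i, a i * b i

/-- The phase `i^{x̂₁·x̂₂} · i^{ŷ₁·ŷ₂} · i^{−((x+y)^^₁·(x+y)^^₂)} · (−1)^{x̂₂·ŷ₁}`. -/
noncomputable def phase {n : ℕ} (x y : PV n) : ℂ :=
  Complex.I ^ (dotZ (liftZ x.1) (liftZ x.2)) *
  Complex.I ^ (dotZ (liftZ y.1) (liftZ y.2)) *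
  Complex.I ^ (-(dotZ (liftZ (x + y).1) (liftZ (x + y).2))) *
  (-1 : ℂ) ^ (dotZ (liftZ x.2) (liftZ y.1))

/-- `w(x,y) ∈ {0,1} ⊆ F2`: zero iff the phase equals `1`. -/
noncomputable def wght {n : ℕ} (x y : PV n) : F2 :=
  if phase x y = 1 then 0 else 1

/-- An outcome of an isotropic subspace `S` is `f : S → F2` with
`f(x+y) = f(x)+f(y)+w(x,y)`. -/
def IsOutcome {n : ℕ} (S : Submodule F2 (PV n)) (f : S → F2) : Prop :=
  ∀ x y : S, f (x + y) = f x + f y + wght (x : PV n) (y : PV n)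

/-- Two outcomes are consistent if they agree on the intersection of their domains. -/
def ConsistentOn {n : ℕ} {S₁ S₂ : Submodule F2 (PV n)} (f₁ : S₁ → F2) (f₂ : S₂ → F2) : Prop :=
  ∀ v (h1 : v ∈ S₁) (h2 : v ∈ S₂), f₁ ⟨v, h1⟩ = f₂ ⟨v, h2⟩

/-- Ordered pairs of maximal isotropic subspaces both containing `w`. -/
def questionPairs (n : ℕ) (w : Submodule F2 (PV n)) :
    Set (Submodule F2 (PV n) × Submodule F2 (PV n)) :=
  {p | p.1 ∈ Lset n n ∧ p.2 ∈ Lset n n ∧ w ≤ p.1 ∧ w ≤ p.2}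

/-- Pairs on which the two players' outcomes agree on the nonzero vector of `w`. -/
def agreePairs (n : ℕ) (f g : (S : Submodule F2 (PV n)) → (S → F2))
    (w : Submodule F2 (PV n)) :
    Set (Submodule F2 (PV n) × Submodule F2 (PV n)) :=
  {p | p.1 ∈ Lset n n ∧ p.2 ∈ Lset n n ∧
    ∃ (h1 : w ≤ p.1) (h2 : w ≤ p.2), ∃ v, ∃ (hv : v ∈ w), v ≠ 0 ∧
      f p.1 ⟨v, h1 hv⟩ = g p.2 ⟨v, h2 hv⟩}

/-- The winning probability `P(f,g)` in the Pauli agreement game `𝒢_n`: `w` is drawn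
uniformly from `L^n_1`, then `(x,y)` uniformly among pairs of maximal isotropic subspaces
containing `w`; the players win if their outcomes agree on the nonzero vector of `w`. -/
noncomputable def agreeProb (n : ℕ) (f g : (S : Submodule F2 (PV n)) → (S → F2)) : ℝ :=
  (1 / (Nat.card (Lset n 1) : ℝ)) *
    ∑ᶠ w ∈ Lset n 1,
      (Nat.card (agreePairs n f g w) : ℝ) / (Nat.card (questionPairs n w) : ℝ)

/-!
For outcome families `f` and `g`, let `F v` and `G v` be the average eigenvalues `±1` that the
maximal isotropic subspaces through `v` assign to `v`. The winning probability is
`1/2 + 𝔼 F G / 2`, so `f = g` does at least as well as guessing, and by Cauchy–Schwarz the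
advantage is controlled by the energies `𝔼 F ^ 2` and `𝔼 G ^ 2`.

The energy is at most the second moment of the average over a random symplectic translate of any
fixed family of maximal isotropic subspaces. Summed over all vectors, this second moment is a
character sum to which only consistent pairs of outcomes contribute. For `n = 2m`, take all direct
sums of `m` lines of the Mermin–Peres magic square. Outcomes on its three rows and three columns
cannot all be consistent, so consistency of subspaces through a vector is a bipartite graph
without certain copies of `K_{3,3}`. Hence its density is exponentially small in the number of
zero blocks of the vector, and so is the energy in `m`.
-/

lemma F2.eq_one_of_ne_zero {a : F2} (h : a ≠ 0) : a = 1 := Fin.eq_one_of_ne_zero a h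

section Cocycle

variable {n : ℕ}

/-- The bilinear pairing `x₂·y₁`, whose symmetrisation is the symplectic product. -/
def crossForm (n : ℕ) : LinearMap.BilinForm F2 (PV n) :=
  (dotProductBilin F2 F2).compl₁₂ (LinearMap.snd F2 _ _) (LinearMap.fst F2 _ _)

lemma crossForm_apply (x y : PV n) : crossForm n x y = ∑ i, x.2 i * y.1 i := rfl

/-- The symplectic product as a bilinear form. -/
def sympForm (n : ℕ) : LinearMap.BilinForm F2 (PV n) := crossForm n + (crossForm n).flip

lemma sympForm_apply (x y : PV n) : sympForm n x y = symp x y := by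
  simp [sympForm, crossForm_apply, symp, mul_comm, add_comm]

lemma symp_eq_crossForm (x y : PV n) : symp x y = crossForm n x y + crossForm n y x :=
  (sympForm_apply x y).symm

lemma symp_add_left (x y z : PV n) : symp (x + y) z = symp x z + symp y z := by
  simp [← sympForm_apply]

lemma symp_add_right (x y z : PV n) : symp x (y + z) = symp x y + symp x z := by
  simp [← sympForm_apply]

lemma symp_self (x : PV n) : symp x x = 0 := by
  rw [symp_eq_crossForm, CharTwo.add_self_eq_zero]

lemma symp_comm (x y : PV n) : symp x y = symp y x := by
  rw [symp_eq_crossForm, symp_eq_crossForm, add_comm]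

/-- The embedding `a ↦ 2a` of `ℤ/2` into `ℤ/4`: it reads a power of `-1` as a power of `i`. -/
def double : F2 →+ ZMod 4 where
  toFun a := 2 * a.val
  map_zero' := rfl
  map_add' := by decide

lemma double_injective : Function.Injective double := by decide

/-- Reduction from `ℤ/4` to `ℤ/2`. -/
def reduce : ZMod 4 →+* F2 := ZMod.castHom (by norm_num) F2

lemma reduce_double : ∀ a, reduce (double a) = 0 := by decide

lemma double_reduce : ∀ a, double (reduce a) = a + a := by decide

/-- The exponent of `i` in the Pauli operator of `x`, that is, `x̂₁·x̂₂` modulo four. -/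
def selfPairing (x : PV n) : ZMod 4 := ∑ i, ((x.1 i).val * (x.2 i).val : ZMod 4)

lemma selfPairing_zero : selfPairing (0 : PV n) = 0 := by simp [selfPairing]

lemma reduce_selfPairing (x : PV n) : reduce (selfPairing x) = crossForm n x x := by
  simp only [selfPairing, crossForm_apply, map_sum]
  refine sum_congr rfl fun i _ => ?_
  generalize x.1 i = a
  generalize x.2 i = b
  revert a b
  decide

/-- The exponent `e ∈ ℤ/4` for which `phase x y = i ^ e`. -/
def phaseExponent (x y : PV n) : ZMod 4 :=
  selfPairing x + selfPairing y - selfPairing (x + y) + double (crossForm n x y)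

lemma phase_eq_I_zpow (x y : PV n) : phase x y = Complex.I ^
    (dotZ (liftZ x.1) (liftZ x.2) + dotZ (liftZ y.1) (liftZ y.2)
      - dotZ (liftZ (x + y).1) (liftZ (x + y).2) + 2 * dotZ (liftZ x.2) (liftZ y.1)) := by
  have hI := Complex.I_ne_zero
  rw [sub_eq_add_neg, zpow_add₀ hI, zpow_add₀ hI, zpow_add₀ hI, zpow_mul]
  simp [phase]

lemma phase_eq_one_iff (x y : PV n) : phase x y = 1 ↔ phaseExponent x y = 0 := by
  have cast_self (z : PV n) : (dotZ (liftZ z.1) (liftZ z.2) : ZMod 4) = selfPairing z := by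
    simp [dotZ, liftZ, selfPairing]
  have cast_cross : 2 * (dotZ (liftZ x.2) (liftZ y.1) : ZMod 4) = double (crossForm n x y) := by
    simp only [dotZ, liftZ, crossForm_apply, map_sum, Int.cast_sum, mul_sum]
    refine sum_congr rfl fun i _ => ?_
    generalize x.2 i = a
    generalize y.1 i = b
    revert a b
    decide
  rw [phase_eq_I_zpow, Complex.isPrimitiveRoot_I.zpow_eq_one_iff_dvd,
    ← ZMod.intCast_zmod_eq_zero_iff_dvd]
  push_cast
  rw [cast_self, cast_self, cast_self, cast_cross, phaseExponent]

lemma reduce_phaseExponent (x y : PV n) : reduce (phaseExponent x y) = symp x y := by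
  simp only [phaseExponent, map_add, map_sub, reduce_selfPairing, reduce_double,
    symp_eq_crossForm, LinearMap.add_apply]
  generalize crossForm n x y = a
  generalize crossForm n y x = b
  grind

/-- Commuting Pauli operators multiply up to a sign, so the phase exponent is even. -/
lemma double_wght {x y : PV n} (h : symp x y = 0) : double (wght x y) = phaseExponent x y := by
  have two_torsion : ∀ e : ZMod 4, reduce e = 0 → double (if e = 0 then 0 else 1) = e := by decide
  rw [wght, if_congr (phase_eq_one_iff x y) rfl rfl]
  exact two_torsion _ ((reduce_phaseExponent x y).trans h)

end Cocycle

section Outcomes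

/-- Pairs, to be added with the twist `w` in the second component: the central extension of `S`
by `F2` with cocycle `w`. -/
structure CocycleExtension {S : Type*} (w : S → S → F2) where
  base : S
  fibre : F2

namespace CocycleExtension

variable {S : Type*} [AddCommGroup S] [Module F2 S] {w : S → S → F2}

/-- The extension by a normalised cocycle has exponent two, hence is commutative. -/
abbrev addCommGroup (cocycle : ∀ x y z, w x y + w (x + y) z = w y z + w x (y + z))
    (diag : ∀ x, w x x = 0) : AddCommGroup (CocycleExtension w) :=
  letI : Add (CocycleExtension w) :=
    ⟨fun p q => ⟨p.base + q.base, p.fibre + q.fibre + w p.base q.base⟩⟩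
  letI : Zero (CocycleExtension w) := ⟨⟨0, 0⟩⟩
  letI : Neg (CocycleExtension w) := ⟨id⟩
  have w_zero_left (x : S) : w 0 x = 0 := by simpa [diag] using (cocycle 0 0 x).symm
  have self_add_self (p : CocycleExtension w) : p + p = 0 := by
    change CocycleExtension.mk _ _ = ⟨0, 0⟩
    rw [ZModModule.add_self, CharTwo.add_self_eq_zero, diag, add_zero]
  letI : AddGroup (CocycleExtension w) := AddGroup.ofLeftAxioms
    (fun p q r => by
      change CocycleExtension.mk _ _ = CocycleExtension.mk _ _
      congr 1
      · exact add_assoc _ _ _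
      · change p.fibre + q.fibre + w p.base q.base + r.fibre + w (p.base + q.base) r.base =
          p.fibre + (q.fibre + r.fibre + w q.base r.base) + w p.base (q.base + r.base)
        linear_combination cocycle p.base q.base r.base)
    (fun p => by
      change CocycleExtension.mk (0 + p.base) (0 + p.fibre + w 0 p.base) = p
      rw [w_zero_left, zero_add, zero_add, add_zero])
    self_add_self
  { add_comm := AddCommute.of_addOrderOf_dvd_two fun p =>
      addOrderOf_dvd_of_nsmul_eq_zero ((two_nsmul p).trans (self_add_self p)) }

end CocycleExtension

/-- The witness is a linear section of the extension with cocycle `w`. -/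
lemma exists_coboundary_of_cocycle {S : Type*} [AddCommGroup S] [Module F2 S] {w : S → S → F2}
    (cocycle : ∀ x y z, w x y + w (x + y) z = w y z + w x (y + z)) (diag : ∀ x, w x x = 0) :
    ∃ f : S → F2, ∀ x y, f (x + y) = f x + f y + w x y := by
  let _ := CocycleExtension.addCommGroup cocycle diag
  let _ : Module F2 (CocycleExtension w) := AddCommGroup.zmodModule fun p => by
    rw [two_nsmul]
    exact neg_add_cancel p
  let π : CocycleExtension w →+ S :=
    { toFun := CocycleExtension.base, map_zero' := rfl, map_add' := fun _ _ => rfl }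
  obtain ⟨s, section_s⟩ := (π.toZModLinearMap 2).exists_rightInverse_of_surjective
    (LinearMap.range_eq_top.2 fun x => ⟨⟨x, 0⟩, rfl⟩)
  have base_s (x : S) : (s x).base = x := LinearMap.congr_fun section_s x
  refine ⟨fun x => (s x).fibre, fun x y => ?_⟩
  have fibre_add : (s (x + y)).fibre = (s x).fibre + (s y).fibre + w (s x).base (s y).base :=
    congrArg CocycleExtension.fibre (map_add s x y)
  rwa [base_s, base_s] at fibre_add

variable {n : ℕ}

theorem IsIsotropic.exists_isOutcome {S : Submodule F2 (PV n)} (hS : IsIsotropic S) :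
    ∃ f : S → F2, IsOutcome S f := by
  have double_wght' (x y : S) : double (wght (x : PV n) y) = phaseExponent (x : PV n) y :=
    double_wght (hS x x.2 y y.2)
  refine exists_coboundary_of_cocycle (w := fun x y : S => wght (x : PV n) y) (fun x y z => ?_)
    fun x => ?_
  · apply double_injective
    rw [map_add, map_add, double_wght', double_wght', double_wght', double_wght']
    simp only [phaseExponent, Submodule.coe_add, map_add, LinearMap.add_apply, add_assoc]
    ring
  · apply double_injective
    rw [double_wght', phaseExponent, ZModModule.add_self (x : PV n), selfPairing_zero,
      ← reduce_selfPairing, double_reduce, map_zero]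
    generalize selfPairing (x : PV n) = q
    revert q
    decide

/-- The products `(ab)(cd)` and `(ac)(bd)` of Pauli operators differ by the commutator of `b` and
`c`. -/
lemma wght_add_add_add_comm {a b c d : PV n} (hab : symp a b = 0) (hcd : symp c d = 0)
    (hac : symp a c = 0) (hbd : symp b d = 0) (hadbc : symp a d = symp b c) :
    wght a b + wght c d + wght (a + b) (c + d)
      = wght a c + wght b d + wght (a + c) (b + d) + symp b c := by
  have h_col : symp (a + b) (c + d) = 0 := by
    simp [symp_add_left, symp_add_right, hac, hbd, hadbc, CharTwo.add_self_eq_zero]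
  have h_row : symp (a + c) (b + d) = 0 := by
    simp [symp_add_left, symp_add_right, hab, hcd, hadbc, symp_comm c b, CharTwo.add_self_eq_zero]
  have cross : crossForm n a b + crossForm n c d + crossForm n (a + b) (c + d)
      = crossForm n a c + crossForm n b d + crossForm n (a + c) (b + d) + symp b c := by
    simp only [symp_eq_crossForm, map_add, LinearMap.add_apply]
    linear_combination -crossForm n c b * CharTwo.two_eq_zero (R := F2)
  apply double_injective
  replace cross := congrArg double cross
  simp only [map_add, double_wght hab, double_wght hcd, double_wght hac, double_wght hbd,
    double_wght h_row, double_wght h_col, phaseExponent, add_add_add_comm a c b d] at cross ⊢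
  linear_combination cross

theorem exists_not_consistentOn_of_magic_square {R K : Fin 3 → Submodule F2 (PV n)}
    (hR : ∀ i, IsIsotropic (R i)) (hK : ∀ j, IsIsotropic (K j))
    {r : ∀ i, R i → F2} {k : ∀ j, K j → F2} (hr : ∀ i, IsOutcome (R i) (r i))
    (hk : ∀ j, IsOutcome (K j) (k j)) {u : Fin 3 → Fin 3 → PV n}
    (mem_row : ∀ i j, u i j ∈ R i) (mem_col : ∀ i j, u i j ∈ K j)
    (row_sum : ∀ i, u i 0 + u i 1 = u i 2) (col_sum : ∀ j, u 0 j + u 1 j = u 2 j)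
    (anticomm : symp (u 0 1) (u 1 0) = 1) : ∃ i j, ¬ConsistentOn (r i) (k j) := by
  by_contra! consistent
  have value_eq (i j) : r i ⟨u i j, mem_row i j⟩ = k j ⟨u i j, mem_col i j⟩ :=
    consistent i j _ _ _
  have row (i) := hr i ⟨u i 0, mem_row i 0⟩ ⟨u i 1, mem_row i 1⟩
  have col (j) := hk j ⟨u 0 j, mem_col 0 j⟩ ⟨u 1 j, mem_col 1 j⟩
  simp only [AddMemClass.mk_add_mk, row_sum, value_eq] at row
  simp only [AddMemClass.mk_add_mk, col_sum] at col
  have comm_row (i) : symp (u i 0) (u i 1) = 0 := hR i _ (mem_row i 0) _ (mem_row i 1)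
  have comm_col (j) : symp (u 0 j) (u 1 j) = 0 := hK j _ (mem_col 0 j) _ (mem_col 1 j)
  have comm_diag : symp (u 0 0) (u 1 1) = symp (u 0 1) (u 1 0) := by
    have := comm_col 2
    rw [← row_sum, ← row_sum, symp_add_left, symp_add_right, symp_add_right, comm_col, comm_col,
      zero_add, add_zero] at this
    exact CharTwo.add_eq_zero.1 this
  have parity := wght_add_add_add_comm (comm_row 0) (comm_row 1) (comm_col 0) (comm_col 1)
    comm_diag
  rw [row_sum, row_sum, col_sum, col_sum, anticomm] at parity
  have := row 0
  have := row 1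
  have := row 2
  have := col 0
  have := col 1
  have := col 2
  grind

end Outcomes

section SymplecticGroup

open scoped Pointwise

lemma smul_mem_pointwise_smul_iff {G R M : Type*} [Group G] [Semiring R] [AddCommMonoid M]
    [Module R M] [DistribMulAction G M] [SMulCommClass G R M] {g : G} {x : M}
    {S : Submodule R M} : g • x ∈ g • S ↔ x ∈ S := by
  rw [← SetLike.mem_coe, Submodule.coe_pointwise_smul, Set.smul_mem_smul_set_iff, SetLike.mem_coe]

variable {n : ℕ}

lemma exists_symp_eq_one {v : PV n} (hv : v ≠ 0) : ∃ z, symp v z = 1 := by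
  by_contra! h
  have symp_zero (z) : symp v z = 0 := by
    by_contra hz
    exact h z (F2.eq_one_of_ne_zero hz)
  refine hv (Prod.ext (funext fun i => ?_) (funext fun i => ?_))
  · simpa [symp, Pi.single_apply] using symp_zero (0, Pi.single i 1)
  · simpa [symp, Pi.single_apply] using symp_zero (Pi.single i 1, 0)

lemma sympForm_nondegenerate (n : ℕ) : (sympForm n).Nondegenerate := by
  have separating (v : PV n) (hv : ∀ z, symp v z = 0) : v = 0 := by
    by_contra h
    obtain ⟨z, hz⟩ := exists_symp_eq_one h
    exact one_ne_zero (hz.symm.trans (hv z))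
  refine ⟨fun v hv => separating v fun z => ?_, fun v hv => separating v fun z => ?_⟩
  · rw [← sympForm_apply, hv]
  · rw [symp_comm, ← sympForm_apply, hv]

lemma mem_of_forall_symp_eq_zero {L : Submodule F2 (PV n)} (hL : L ∈ Lset n n) {v : PV n}
    (hv : ∀ x ∈ L, symp x v = 0) : v ∈ L := by
  have le_orthogonal : L ≤ (sympForm n).orthogonal L := fun x hx y hy =>
    (sympForm_apply y x).trans (hL.1 y hy x hx)
  have finrank_eq : Module.finrank F2 L = Module.finrank F2 ((sympForm n).orthogonal L) := by
    rw [LinearMap.BilinForm.finrank_orthogonal (sympForm_nondegenerate n), hL.2]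
    simp
  rw [Submodule.eq_of_le_of_finrank_eq le_orthogonal finrank_eq]
  exact fun x hx => (sympForm_apply x v).trans (hv x hx)

/-- The linear automorphisms of `F2^{2n}` preserving the symplectic product. -/
def symplecticGroup (n : ℕ) : Subgroup (PV n ≃ₗ[F2] PV n) where
  carrier := {σ | ∀ x y, symp (σ x) (σ y) = symp x y}
  mul_mem' hσ hτ x y := (hσ _ _).trans (hτ x y)
  one_mem' _ _ := rfl
  inv_mem' {σ} hσ x y := by
    rw [← hσ, ← LinearEquiv.mul_apply, ← LinearEquiv.mul_apply, mul_inv_cancel]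
    rfl

lemma symp_smul_smul (σ : symplecticGroup n) (x y : PV n) : symp (σ • x) (σ • y) = symp x y :=
  σ.2 x y

lemma smul_mem_Lset (σ : symplecticGroup n) {k : ℕ} {S : Submodule F2 (PV n)}
    (hS : S ∈ Lset n k) : σ • S ∈ Lset n k := by
  refine ⟨?_, (LinearEquiv.finrank_map_eq σ.1 S).trans hS.2⟩
  rintro _ ⟨x, hx, rfl⟩ _ ⟨y, hy, rfl⟩
  exact (symp_smul_smul σ x y).trans (hS.1 x hx y hy)

/-- The symplectic transvection `x ↦ x + ⟨a, x⟩ a`. -/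
def sympTransvection (a : PV n) : symplecticGroup n where
  val := LinearEquiv.transvection (f := sympForm n a) ((sympForm_apply a a).trans (symp_self a))
  property x y := by
    simp only [LinearEquiv.transvection.apply, ← sympForm_apply, map_add, map_smul,
      LinearMap.add_apply, LinearMap.smul_apply, smul_eq_mul]
    simp only [sympForm_apply, symp_self, symp_comm x a]
    linear_combination symp a x * symp a y * CharTwo.two_eq_zero (R := F2)

lemma sympTransvection_smul (a x : PV n) : sympTransvection a • x = x + symp a x • a := by
  rw [← sympForm_apply]
  rfl

lemma sympTransvection_add_smul {u v : PV n} (h : symp u v = 1) :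
    sympTransvection (u + v) • u = v := by
  rw [sympTransvection_smul, symp_add_left, symp_self, symp_comm, h, zero_add, one_smul,
    ← add_assoc, ZModModule.add_self, zero_add]

lemma symplecticGroup.exists_smul_eq {u v : PV n} (hu : u ≠ 0) (hv : v ≠ 0) :
    ∃ σ : symplecticGroup n, σ • u = v := by
  obtain ⟨z, huz, hvz⟩ : ∃ z, symp u z = 1 ∧ symp v z = 1 := by
    obtain ⟨a, ha⟩ := exists_symp_eq_one hu
    obtain ⟨b, hb⟩ := exists_symp_eq_one hv
    by_cases hva : symp v a = 0
    · by_cases hub : symp u b = 0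
      · exact ⟨a + b, by rw [symp_add_right, ha, hub, add_zero],
          by rw [symp_add_right, hva, hb, zero_add]⟩
      · exact ⟨b, F2.eq_one_of_ne_zero hub, hb⟩
    · exact ⟨a, ha, F2.eq_one_of_ne_zero hva⟩
  refine ⟨sympTransvection (z + v) * sympTransvection (u + z), ?_⟩
  rw [mul_smul, sympTransvection_add_smul huz,
    sympTransvection_add_smul ((symp_comm z v).trans hvz)]

variable {L L' : Submodule F2 (PV n)}

lemma symplecticGroup.exists_smul_inf_lt (hL : L ∈ Lset n n) (hL' : L' ∈ Lset n n) (h : ¬L ≤ L') :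
    ∃ σ : symplecticGroup n, (∀ z ∈ L ⊓ L', σ • z = z) ∧ L ⊓ L' < σ • L ⊓ L' := by
  obtain ⟨x, hxL, hxL'⟩ := Set.not_subset.1 h
  obtain ⟨y, hyL', hyx⟩ : ∃ y ∈ L', symp y x ≠ 0 := by
    by_contra! orth
    exact hxL' (mem_of_forall_symp_eq_zero hL' orth)
  have hxy : symp x y = 1 := (symp_comm x y).trans (F2.eq_one_of_ne_zero hyx)
  have fixes (z) (hz : z ∈ L ⊓ L') : sympTransvection (x + y) • z = z := by
    rw [sympTransvection_smul, symp_add_left, hL.1 x hxL z hz.1, hL'.1 y hyL' z hz.2, add_zero,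
      zero_smul, add_zero]
  have le : L ⊓ L' ≤ sympTransvection (x + y) • L ⊓ L' := fun z hz =>
    ⟨⟨z, hz.1, fixes z hz⟩, hz.2⟩
  have y_mem : y ∈ sympTransvection (x + y) • L ⊓ L' :=
    ⟨⟨x, hxL, sympTransvection_add_smul hxy⟩, hyL'⟩
  have y_notMem : y ∉ L ⊓ L' := fun hy => hyx (hL.1 y hy.1 x hxL)
  exact ⟨_, fixes, le.lt_of_not_ge fun ge => y_notMem (ge y_mem)⟩

lemma symplecticGroup.exists_smul_eq_of_mem_Lset (hL : L ∈ Lset n n) (hL' : L' ∈ Lset n n) :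
    ∃ σ : symplecticGroup n, σ • L = L' ∧ ∀ z ∈ L ⊓ L', σ • z = z := by
  induction h : L ⊓ L' using WellFoundedGT.induction generalizing L with
  | ind M ih =>
    subst h
    by_cases hLL' : L ≤ L'
    · refine ⟨1, ?_, fun z _ => one_smul _ z⟩
      rw [one_smul, Submodule.eq_of_le_of_finrank_eq hLL' (hL.2.trans hL'.2.symm)]
    obtain ⟨τ, τ_fixes, τ_lt⟩ := symplecticGroup.exists_smul_inf_lt hL hL' hLL'
    obtain ⟨σ, σ_smul, σ_fixes⟩ := ih _ τ_lt (smul_mem_Lset τ hL) rfl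
    refine ⟨σ * τ, (mul_smul σ τ L).trans σ_smul, fun z hz => ?_⟩
    rw [mul_smul, τ_fixes z hz, σ_fixes z (τ_lt.le hz)]

lemma ker_snd_mem_Lset (n : ℕ) :
    LinearMap.ker (LinearMap.snd F2 (Fin n → F2) (Fin n → F2)) ∈ Lset n n := by
  constructor
  · intro x hx y hy
    rw [LinearMap.mem_ker, LinearMap.snd_apply] at hx hy
    simp [symp, hx, hy]
  · rw [← LinearMap.range_inl, LinearMap.finrank_range_of_inj LinearMap.inl_injective,
      Module.finrank_fin_fun]

lemma exists_mem_Lset_of_ne_zero {v : PV n} (hv : v ≠ 0) : ∃ L ∈ Lset n n, v ∈ L := by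
  have : Nonempty (Fin n) := by
    by_contra h
    rw [not_nonempty_iff] at h
    exact hv (Subsingleton.elim _ _)
  obtain ⟨σ, hσ⟩ := symplecticGroup.exists_smul_eq (show ((1, 0) : PV n) ≠ 0 by simp) hv
  exact ⟨_, smul_mem_Lset σ (ker_snd_mem_Lset n), (1, 0), rfl, hσ⟩

open MulAction

lemma symplecticGroup.orbit_eq_nonzero {v : PV n} (hv : v ≠ 0) :
    orbit (symplecticGroup n) v = {u | u ≠ 0} := by
  ext u
  refine ⟨?_, fun hu => symplecticGroup.exists_smul_eq hv hu⟩
  rintro ⟨σ, rfl⟩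
  exact (smul_ne_zero_iff_ne σ).2 hv

lemma symplecticGroup.orbit_stabilizer_eq {v : PV n} (hL : L ∈ Lset n n) (hv : v ∈ L) :
    orbit (stabilizer (symplecticGroup n) v) L = {S | S ∈ Lset n n ∧ v ∈ S} := by
  ext S
  constructor
  · rintro ⟨⟨σ, hσ⟩, rfl⟩
    exact ⟨smul_mem_Lset σ hL, v, hv, hσ⟩
  · rintro ⟨hS, hvS⟩
    obtain ⟨σ, hσ, σ_fixes⟩ := symplecticGroup.exists_smul_eq_of_mem_Lset hL hS
    exact ⟨⟨σ, σ_fixes v ⟨hv, hvS⟩⟩, hσ⟩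

end SymplecticGroup

section Averages

open MulAction
open scoped BigOperators Pointwise

lemma expect_smul_eq_expect_orbit {G α : Type*} [Group G] [Fintype G] [MulAction G α]
    {s : Finset α} {a : α} (hs : (s : Set α) = orbit G a) (φ : α → ℝ) :
    𝔼 g : G, φ (g • a) = 𝔼 x ∈ s, φ x := by
  have smul_mem (g : G) {x : α} (hx : x ∈ s) : g • x ∈ s := by
    rw [← mem_coe, hs] at hx ⊢
    exact mem_orbit_of_mem_orbit g hx
  have expect_const_on (x) (hx : x ∈ s) : 𝔼 g : G, φ (g • x) = 𝔼 g : G, φ (g • a) := by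
    rw [← mem_coe, hs] at hx
    obtain ⟨h, rfl⟩ := hx
    exact Fintype.expect_equiv (Equiv.mulRight h) _ _ fun g => by simp [mul_smul]
  have expect_smul (g : G) : 𝔼 x ∈ s, φ (g • x) = 𝔼 x ∈ s, φ x :=
    expect_bij' (fun x _ => g • x) (fun x _ => g⁻¹ • x) (fun _ => smul_mem g)
      (fun _ => smul_mem g⁻¹) (fun _ _ => inv_smul_smul g _) (fun _ _ => smul_inv_smul g _)
      fun _ _ => rfl
  have nonempty : s.Nonempty := by
    rw [← coe_nonempty, hs]
    exact nonempty_orbit a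
  calc 𝔼 g : G, φ (g • a) = 𝔼 x ∈ s, 𝔼 g : G, φ (g • x) := by
        rw [expect_congr rfl expect_const_on, expect_const nonempty]
    _ = 𝔼 x ∈ s, φ x := by simp_rw [expect_comm s, expect_smul, expect_const univ_nonempty]

variable {n : ℕ}

noncomputable instance : Fintype (symplecticGroup n) :=
  have : Finite (PV n ≃ₗ[F2] PV n) := Finite.of_injective _ DFunLike.coe_injective
  Fintype.ofFinite _

/-- The maximal isotropic subspaces containing `v`. -/
noncomputable def lagrangiansThrough (v : PV n) : Finset (Submodule F2 (PV n)) :=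
  (Set.toFinite {S | S ∈ Lset n n ∧ v ∈ S}).toFinset

lemma mem_lagrangiansThrough {v : PV n} {S : Submodule F2 (PV n)} :
    S ∈ lagrangiansThrough v ↔ S ∈ Lset n n ∧ v ∈ S :=
  Set.Finite.mem_toFinset _

lemma smul_mem_lagrangiansThrough (σ : symplecticGroup n) {v : PV n} {S : Submodule F2 (PV n)}
    (hS : S ∈ lagrangiansThrough v) : σ • S ∈ lagrangiansThrough (σ • v) := by
  rw [mem_lagrangiansThrough] at hS ⊢
  exact ⟨smul_mem_Lset σ hS.1, smul_mem_pointwise_smul_iff.2 hS.2⟩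

lemma lagrangiansThrough_nonempty {v : PV n} (hv : v ≠ 0) : (lagrangiansThrough v).Nonempty := by
  obtain ⟨L, hL, hvL⟩ := exists_mem_Lset_of_ne_zero hv
  exact ⟨L, mem_lagrangiansThrough.2 ⟨hL, hvL⟩⟩

lemma expect_lagrangiansThrough_smul (σ : symplecticGroup n) (v : PV n)
    (φ : Submodule F2 (PV n) → ℝ) :
    𝔼 S ∈ lagrangiansThrough v, φ (σ • S) = 𝔼 S ∈ lagrangiansThrough (σ • v), φ S := by
  refine expect_bij' (fun S _ => σ • S) (fun S _ => σ⁻¹ • S)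
    (fun _ => smul_mem_lagrangiansThrough σ) (fun S hS => ?_) (fun _ _ => inv_smul_smul σ _)
    (fun _ _ => smul_inv_smul σ _) fun _ _ => rfl
  simpa using smul_mem_lagrangiansThrough σ⁻¹ hS

/-- The image of `v` is a random nonzero vector, and the stabiliser of `v` randomises `L`. -/
theorem expect_symplecticGroup_smul {v : PV n} (hv : v ≠ 0) {L : Submodule F2 (PV n)}
    (hL : L ∈ lagrangiansThrough v) (φ : PV n → Submodule F2 (PV n) → ℝ) :
    𝔼 σ : symplecticGroup n, φ (σ • v) (σ • L)
      = 𝔼 u with u ≠ 0, 𝔼 S ∈ lagrangiansThrough u, φ u S := by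
  have := Fintype.ofFinite (stabilizer (symplecticGroup n) v)
  rw [mem_lagrangiansThrough] at hL
  have stabilizer_orbit : (lagrangiansThrough v : Set (Submodule F2 (PV n)))
      = orbit (stabilizer (symplecticGroup n) v) L := by
    ext S
    rw [mem_coe, mem_lagrangiansThrough, symplecticGroup.orbit_stabilizer_eq hL.1 hL.2,
      Set.mem_ofPred]
  have nonzero_orbit : (({u | u ≠ 0} : Finset (PV n)) : Set (PV n))
      = orbit (symplecticGroup n) v := by
    rw [symplecticGroup.orbit_eq_nonzero hv, coe_filter_univ]
  have translate (τ : stabilizer (symplecticGroup n) v) :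
      𝔼 σ : symplecticGroup n, φ (σ • v) (σ • L)
        = 𝔼 σ : symplecticGroup n, φ (σ • v) (σ • τ • L) := by
    refine (Fintype.expect_equiv (Equiv.mulRight τ.1) _ _ fun σ => ?_).symm
    rw [Equiv.coe_mulRight, mul_smul, mul_smul, show τ.1 • v = v from τ.2]
    rfl
  calc 𝔼 σ : symplecticGroup n, φ (σ • v) (σ • L)
      = 𝔼 τ : stabilizer (symplecticGroup n) v, 𝔼 σ : symplecticGroup n,
          φ (σ • v) (σ • τ • L) := by
        rw [expect_congr rfl fun τ _ => (translate τ).symm, expect_const univ_nonempty]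
    _ = 𝔼 σ : symplecticGroup n, 𝔼 S ∈ lagrangiansThrough v, φ (σ • v) (σ • S) := by
        rw [expect_comm]
        exact expect_congr rfl fun σ _ =>
          expect_smul_eq_expect_orbit stabilizer_orbit fun S => φ (σ • v) (σ • S)
    _ = 𝔼 σ : symplecticGroup n, 𝔼 S ∈ lagrangiansThrough (σ • v), φ (σ • v) S :=
        expect_congr rfl fun σ _ => expect_lagrangiansThrough_smul σ v _
    _ = 𝔼 u with u ≠ 0, 𝔼 S ∈ lagrangiansThrough u, φ u S :=
        expect_smul_eq_expect_orbit nonzero_orbit fun u => 𝔼 S ∈ lagrangiansThrough u, φ u S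

end Averages

section Game

open scoped BigOperators Pointwise

/-- The character `a ↦ (-1)^a` of `F2`. -/
def signChar : AddChar F2 ℝ := AddChar.zmodChar 2 (ζ := -1) (by norm_num)

lemma signChar_one : signChar 1 = -1 := by
  rw [signChar, AddChar.zmodChar_apply, ZMod.val_one, pow_one]

lemma ite_eq_signChar (a b : F2) :
    (if a = b then 1 else 0 : ℝ) = (1 + signChar a * signChar b) / 2 := by
  rw [← AddChar.map_add_eq_mul]
  rcases eq_or_ne a b with rfl | h
  · simp [CharTwo.add_self_eq_zero]
  · rw [if_neg h, F2.eq_one_of_ne_zero (CharTwo.add_eq_zero.not.2 h), signChar_one]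
    norm_num

variable {n : ℕ}

/-- The eigenvalue `±1` that the outcome `f` of `S` assigns to the Pauli operator `v ∈ S`; it is
set to `0` outside `S`, so that sums over subspaces containing `v` can run over all subspaces. -/
noncomputable def outcomeSign {S : Submodule F2 (PV n)} (f : S → F2) (v : PV n) : ℝ :=
  open Classical in if h : v ∈ S then signChar (f ⟨v, h⟩) else 0

lemma outcomeSign_of_mem {S : Submodule F2 (PV n)} (f : S → F2) {v : PV n} (h : v ∈ S) :
    outcomeSign f v = signChar (f ⟨v, h⟩) := dif_pos h

lemma outcomeSign_of_notMem {S : Submodule F2 (PV n)} (f : S → F2) {v : PV n} (h : v ∉ S) :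
    outcomeSign f v = 0 := dif_neg h

/-- The average eigenvalue assigned to `v` by the outcomes of the maximal isotropic subspaces
containing `v`. -/
noncomputable def averageSign (f : (S : Submodule F2 (PV n)) → (S → F2)) (v : PV n) : ℝ :=
  𝔼 S ∈ lagrangiansThrough v, outcomeSign (f S) v

lemma eq_of_mem_span_singleton {u v : PV n} (hu : u ∈ Submodule.span F2 {v}) (hu0 : u ≠ 0) :
    u = v := by
  obtain ⟨c, rfl⟩ := Submodule.mem_span_singleton.1 hu
  rw [F2.eq_one_of_ne_zero (left_ne_zero_of_smul hu0), one_smul]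

lemma Lset_one_eq_image :
    Lset n 1
      = (fun v => Submodule.span F2 {v}) '' (({v | v ≠ 0} : Finset (PV n)) : Set (PV n)) := by
  ext S
  rw [coe_filter_univ]
  constructor
  · rintro ⟨-, hS⟩
    obtain ⟨v, hv, spans⟩ := finrank_eq_one_iff'.1 hS
    refine ⟨v, Submodule.coe_eq_zero.not.2 hv, le_antisymm ?_ fun w hw => ?_⟩
    · exact (Submodule.span_singleton_le_iff_mem _ _).2 v.2
    · obtain ⟨c, hc⟩ := spans ⟨w, hw⟩
      exact Submodule.mem_span_singleton.2 ⟨c, congrArg Subtype.val hc⟩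
  · rintro ⟨v, hv, rfl⟩
    refine ⟨fun x hx y hy => ?_, finrank_span_singleton hv⟩
    obtain ⟨c, rfl⟩ := Submodule.mem_span_singleton.1 hx
    obtain ⟨d, rfl⟩ := Submodule.mem_span_singleton.1 hy
    simp [← sympForm_apply, (sympForm_apply v v).trans (symp_self v)]

lemma injOn_span_singleton :
    Set.InjOn (fun v => Submodule.span F2 {v}) (({v | v ≠ 0} : Finset (PV n)) : Set (PV n)) := by
  intro u hu v _ h
  rw [coe_filter_univ] at hu
  have u_mem : u ∈ Submodule.span F2 {v} := h.le (Submodule.mem_span_singleton_self u)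
  exact eq_of_mem_span_singleton u_mem hu

lemma questionPairs_span_singleton (v : PV n) : questionPairs n (Submodule.span F2 {v}) =
    (lagrangiansThrough v ×ˢ lagrangiansThrough v : Finset _) := by
  ext p
  simp only [questionPairs, Set.mem_ofPred, Submodule.span_singleton_le_iff_mem, mem_coe,
    mem_product, mem_lagrangiansThrough]
  tauto

variable (f g : (S : Submodule F2 (PV n)) → (S → F2))

open Classical in
lemma agreePairs_span_singleton {v : PV n} (hv : v ≠ 0) :
    agreePairs n f g (Submodule.span F2 {v}) =
      ({p ∈ lagrangiansThrough v ×ˢ lagrangiansThrough v |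
        ∃ (h₁ : v ∈ p.1) (h₂ : v ∈ p.2), f p.1 ⟨v, h₁⟩ = g p.2 ⟨v, h₂⟩} : Finset _) := by
  ext p
  simp only [coe_filter, mem_product, mem_lagrangiansThrough]
  constructor
  · rintro ⟨h₁, h₂, le₁, le₂, u, hu, hu0, agree⟩
    obtain rfl := eq_of_mem_span_singleton hu hu0
    exact ⟨⟨⟨h₁, le₁ hu⟩, h₂, le₂ hu⟩, le₁ hu, le₂ hu, agree⟩
  · rintro ⟨⟨⟨h₁, -⟩, h₂, -⟩, hv₁, hv₂, agree⟩
    exact ⟨h₁, h₂, (Submodule.span_singleton_le_iff_mem _ _).2 hv₁,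
      (Submodule.span_singleton_le_iff_mem _ _).2 hv₂, v, Submodule.mem_span_singleton_self v, hv,
      agree⟩

lemma agree_ratio_span_singleton {v : PV n} (hv : v ≠ 0) :
    (Nat.card (agreePairs n f g (Submodule.span F2 {v})) : ℝ)
        / Nat.card (questionPairs n (Submodule.span F2 {v}))
      = (1 + averageSign f v * averageSign g v) / 2 := by
  classical
  rw [agreePairs_span_singleton f g hv, questionPairs_span_singleton, Nat.card_coe_set_eq,
    Nat.card_coe_set_eq, Set.ncard_coe_finset, Set.ncard_coe_finset, ← sum_boole,
    ← expect_eq_sum_div_card]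
  have agree_eq : ∀ p ∈ lagrangiansThrough v ×ˢ lagrangiansThrough v,
      (if ∃ (h₁ : v ∈ p.1) (h₂ : v ∈ p.2), f p.1 ⟨v, h₁⟩ = g p.2 ⟨v, h₂⟩ then 1 else 0 : ℝ)
        = (1 + outcomeSign (f p.1) v * outcomeSign (g p.2) v) / 2 := by
    rintro p hp
    rw [mem_product, mem_lagrangiansThrough, mem_lagrangiansThrough] at hp
    simp only [hp.1.2, hp.2.2, exists_true_left, outcomeSign_of_mem, ite_eq_signChar]
  have nonempty := lagrangiansThrough_nonempty hv
  rw [expect_congr rfl agree_eq, ← expect_div, expect_add_distrib,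
    expect_const (nonempty.product nonempty), averageSign, averageSign, expect_mul_expect,
    expect_product]

theorem agreeProb_eq_expect :
    agreeProb n f g = 𝔼 v with v ≠ 0, (1 + averageSign f v * averageSign g v) / 2 := by
  rw [agreeProb, Lset_one_eq_image, finsum_mem_image injOn_span_singleton, finsum_mem_coe_finset,
    Nat.card_coe_set_eq, injOn_span_singleton.ncard_image, Set.ncard_coe_finset,
    expect_eq_sum_div_card, one_div_mul_eq_div]
  congr 1
  exact sum_congr rfl fun v hv => agree_ratio_span_singleton f g (mem_filter.1 hv).2

/-- The mean square of the average eigenvalues: by Cauchy–Schwarz it controls the advantage over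
random guessing. -/
noncomputable def energy : ℝ := 𝔼 v with v ≠ 0, averageSign f v ^ 2

lemma nonzero_nonempty (hn : n ≠ 0) : ({v | v ≠ 0} : Finset (PV n)).Nonempty := by
  have : NeZero n := ⟨hn⟩
  exact ⟨(1, 0), by simp⟩

lemma half_le_agreeProb_self (hn : n ≠ 0) : 1 / 2 ≤ agreeProb n f f := by
  rw [agreeProb_eq_expect]
  refine le_expect (nonzero_nonempty hn) fun v _ => ?_
  gcongr
  linarith [mul_self_nonneg (averageSign f v)]

lemma agreeProb_le_energy (hn : n ≠ 0) : agreeProb n f g ≤ 1 / 2 + (energy f + energy g) / 4 := by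
  rw [agreeProb_eq_expect, energy, energy, ← expect_add_distrib, expect_div,
    ← expect_const (nonzero_nonempty hn) (1 / 2 : ℝ), ← expect_add_distrib]
  refine expect_le_expect fun v _ => ?_
  linarith [two_mul_le_add_sq (averageSign f v) (averageSign g v)]

/-- The difference of the two sides is the second moment of the deviation from `averageSign f`. -/
lemma card_sq_mul_energy_le {ι : Type*} {s : Finset ι} {v : PV n} (hv : v ≠ 0)
    {L : ι → Submodule F2 (PV n)} (hL : ∀ i ∈ s, L i ∈ lagrangiansThrough v) :
    (#s : ℝ) ^ 2 * energy f
      ≤ 𝔼 σ : symplecticGroup n, (∑ i ∈ s, outcomeSign (f (σ • L i)) (σ • v)) ^ 2 := by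
  rcases s.eq_empty_or_nonempty with rfl | ⟨i₀, hi₀⟩
  · simp
  have cross (i) (hi : i ∈ s) : 𝔼 σ : symplecticGroup n,
      outcomeSign (f (σ • L i)) (σ • v) * averageSign f (σ • v) = energy f := by
    rw [expect_symplecticGroup_smul hv (hL i hi)
      fun u S => outcomeSign (f S) u * averageSign f u, energy]
    exact expect_congr rfl fun u _ => by rw [← expect_mul, ← averageSign, sq]
  have square : 𝔼 σ : symplecticGroup n, averageSign f (σ • v) ^ 2 = energy f := by
    rw [expect_symplecticGroup_smul hv (hL i₀ hi₀) fun u _ => averageSign f u ^ 2, energy]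
    exact expect_congr rfl fun u hu =>
      expect_const (lagrangiansThrough_nonempty (mem_filter.1 hu).2) _
  calc (#s : ℝ) ^ 2 * energy f = 2 * #s * (#s * energy f) - #s ^ 2 * energy f := by ring
    _ = 𝔼 σ : symplecticGroup n, (2 * #s * ∑ i ∈ s,
          outcomeSign (f (σ • L i)) (σ • v) * averageSign f (σ • v)
          - #s ^ 2 * averageSign f (σ • v) ^ 2) := by
        rw [expect_sub_distrib, ← mul_expect, ← mul_expect, square, expect_sum_comm,
          sum_congr rfl cross, sum_const, nsmul_eq_mul]
    _ ≤ _ := expect_le_expect fun σ _ => by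
        rw [← sum_mul]
        linarith [sq_nonneg (∑ i ∈ s, outcomeSign (f (σ • L i)) (σ • v)
          - #s * averageSign f (σ • v))]

lemma signChar_mul_self (a : F2) : signChar a * signChar a = 1 := by
  rw [← AddChar.map_add_eq_mul, CharTwo.add_self_eq_zero, AddChar.map_zero_eq_one]

lemma outcomeSign_add {S : Submodule F2 (PV n)} {f : S → F2} (hf : IsOutcome S f) {u : PV n}
    (hu : u ∈ S) (v : PV n) :
    outcomeSign f (v + u) = outcomeSign f v * outcomeSign f u * signChar (wght v u) := by
  by_cases hv : v ∈ S
  · rw [outcomeSign_of_mem f (add_mem hv hu), outcomeSign_of_mem f hv, outcomeSign_of_mem f hu,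
      ← AddChar.map_add_eq_mul, ← AddChar.map_add_eq_mul]
    exact congrArg signChar (hf ⟨v, hv⟩ ⟨u, hu⟩)
  · rw [outcomeSign_of_notMem f hv, outcomeSign_of_notMem f (mt (add_mem_cancel_right hu).1 hv),
      zero_mul, zero_mul]

open Classical in
/-- Two outcomes differ by a character of the intersection of their domains, and a nontrivial
character has zero sum. -/
lemma sum_outcomeSign_mul_outcomeSign {S T : Submodule F2 (PV n)} {f : S → F2} {g : T → F2}
    (hf : IsOutcome S f) (hg : IsOutcome T g) :
    ∑ v, outcomeSign f v * outcomeSign g v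
      = ∑ v with v ∈ S ∧ v ∈ T, if ConsistentOn f g then 1 else 0 := by
  by_cases h : ConsistentOn f g
  · rw [sum_filter]
    refine sum_congr rfl fun v _ => ?_
    split_ifs with hv
    · rw [outcomeSign_of_mem f hv.1, outcomeSign_of_mem g hv.2, h v hv.1 hv.2, signChar_mul_self]
    · rcases not_and_or.1 hv with hv | hv <;> simp [outcomeSign_of_notMem _ hv]
  · simp only [h, if_false, sum_const_zero]
    simp only [ConsistentOn, not_forall] at h
    obtain ⟨u, huS, huT, ne⟩ := h
    have sign_u : outcomeSign f u * outcomeSign g u = -1 := by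
      have := ite_eq_signChar (f ⟨u, huS⟩) (g ⟨u, huT⟩)
      rw [if_neg ne] at this
      rw [outcomeSign_of_mem f huS, outcomeSign_of_mem g huT]
      linarith
    refine self_eq_neg.1 ?_
    calc ∑ v, outcomeSign f v * outcomeSign g v
        = ∑ v, outcomeSign f (v + u) * outcomeSign g (v + u) :=
          (Equiv.sum_comp (Equiv.addRight u) _).symm
      _ = ∑ v, -(outcomeSign f v * outcomeSign g v) := sum_congr rfl fun v _ => by
          rw [outcomeSign_add hf huS, outcomeSign_add hg huT]
          linear_combination (outcomeSign f v * outcomeSign g v) * sign_u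
            + (outcomeSign f v * outcomeSign g v * outcomeSign f u * outcomeSign g u)
              * signChar_mul_self (wght v u)
      _ = _ := sum_neg_distrib _

open Classical in
lemma sum_sq_sum_outcomeSign {ι : Type*} [Fintype ι] {L : ι → Submodule F2 (PV n)}
    {f : ∀ i, L i → F2} (hf : ∀ i, IsOutcome (L i) (f i)) :
    ∑ v, (∑ i, outcomeSign (f i) v) ^ 2
      = ∑ v, ∑ i with v ∈ L i, ∑ j with v ∈ L j, if ConsistentOn (f i) (f j) then 1 else 0 := by
  calc ∑ v, (∑ i, outcomeSign (f i) v) ^ 2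
      = ∑ i, ∑ j, ∑ v, outcomeSign (f i) v * outcomeSign (f j) v := by
        simp_rw [sq, sum_mul_sum]
        rw [sum_comm]
        exact sum_congr rfl fun i _ => sum_comm
    _ = ∑ i, ∑ j, ∑ v, if v ∈ L i then
          if v ∈ L j then if ConsistentOn (f i) (f j) then 1 else 0 else 0 else 0 := by
        simp_rw [sum_outcomeSign_mul_outcomeSign (hf _) (hf _), sum_filter, ite_and]
    _ = ∑ v, ∑ i, ∑ j, if v ∈ L i then
          if v ∈ L j then if ConsistentOn (f i) (f j) then 1 else 0 else 0 else 0 :=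
        (sum_congr rfl fun i _ => sum_comm).trans sum_comm
    _ = _ := by simp_rw [sum_filter, sum_ite_irrel, sum_const_zero]

open Classical in
theorem energy_mul_sum_card_sq_le {ι : Type*} [Fintype ι] {L : ι → Submodule F2 (PV n)}
    (hL : ∀ i, L i ∈ Lset n n) (hf : ∀ S ∈ Lset n n, IsOutcome S (f S)) :
    energy f * ∑ v with v ≠ 0, (#{i | v ∈ L i} : ℝ) ^ 2
      ≤ 𝔼 σ : symplecticGroup n, ∑ v, ∑ i with v ∈ L i, ∑ j with v ∈ L j,
          if ConsistentOn (f (σ • L i)) (f (σ • L j)) then 1 else 0 := by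
  have smul_mem_smul (σ : symplecticGroup n) (v i) : σ • v ∈ σ • L i ↔ v ∈ L i :=
    smul_mem_pointwise_smul_iff
  have extend (σ : symplecticGroup n) (v : PV n) :
      ∑ i with v ∈ L i, outcomeSign (f (σ • L i)) (σ • v)
        = ∑ i, outcomeSign (f (σ • L i)) (σ • v) := by
    refine sum_subset (subset_univ _) fun i _ hi => outcomeSign_of_notMem _ ?_
    rwa [mem_filter_univ, ← smul_mem_smul σ] at hi
  have sum_square (σ : symplecticGroup n) :
      ∑ v, (∑ i, outcomeSign (f (σ • L i)) (σ • v)) ^ 2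
        = ∑ v, ∑ i with v ∈ L i, ∑ j with v ∈ L j,
          if ConsistentOn (f (σ • L i)) (f (σ • L j)) then 1 else 0 := by
    have sum_smul (φ : PV n → ℝ) : ∑ v, φ (σ • v) = ∑ v, φ v :=
      Equiv.sum_comp (MulAction.toPerm σ) φ
    rw [sum_smul fun v => (∑ i, outcomeSign (f (σ • L i)) v) ^ 2,
      sum_sq_sum_outcomeSign fun i => hf _ (smul_mem_Lset σ (hL i)), ← sum_smul]
    simp_rw [smul_mem_smul]
  calc energy f * ∑ v with v ≠ 0, (#{i | v ∈ L i} : ℝ) ^ 2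
      ≤ ∑ v with v ≠ 0, 𝔼 σ : symplecticGroup n,
          (∑ i with v ∈ L i, outcomeSign (f (σ • L i)) (σ • v)) ^ 2 := by
        rw [mul_comm, sum_mul]
        refine sum_le_sum fun v hv => card_sq_mul_energy_le f (mem_filter.1 hv).2 fun i hi => ?_
        exact mem_lagrangiansThrough.2 ⟨hL i, (mem_filter.1 hi).2⟩
    _ ≤ ∑ v, 𝔼 σ : symplecticGroup n,
          (∑ i with v ∈ L i, outcomeSign (f (σ • L i)) (σ • v)) ^ 2 :=
        sum_le_sum_of_subset_of_nonneg (subset_univ _) fun v _ _ =>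
          expect_nonneg fun σ _ => sq_nonneg _
    _ = _ := by
        simp_rw [extend]
        rw [← expect_sum_comm]
        exact expect_congr rfl fun σ _ => sum_square σ

end Game

section Counting

open Fintype (piFinset mem_piFinset card_piFinset piFinset_nonempty)
open scoped BigOperators

variable {α β ι κ : Type*}

lemma pow_expect_le_expect_pow {s : Finset α} (hs : s.Nonempty) {h : α → ℝ}
    (hh : ∀ a ∈ s, 0 ≤ h a) (n : ℕ) : (𝔼 a ∈ s, h a) ^ n ≤ 𝔼 a ∈ s, h a ^ n := by
  have weights : ∑ _a ∈ s, (#s : ℝ)⁻¹ = 1 := by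
    rw [sum_const, nsmul_eq_mul, mul_inv_cancel₀ (by simpa using hs.ne_empty)]
  simpa only [expect_eq_sum_div_card, div_eq_inv_mul, mul_sum] using
    Real.pow_arith_mean_le_arith_mean_pow s _ h (fun _ _ => by positivity) weights hh n

/-- A dense bipartite graph contains many copies of the complete bipartite graph `K_{s,t}`. -/
theorem pow_expect_expect_le_expect_prod {A : Finset α} {B : Finset β} (hA : A.Nonempty)
    (hB : B.Nonempty) {R : α → β → ℝ} (hR : ∀ a b, 0 ≤ R a b) (s t : ℕ) :
    (𝔼 a ∈ A, 𝔼 b ∈ B, R a b) ^ (s * t)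
      ≤ 𝔼 x ∈ piFinset fun _ : Fin s => A, 𝔼 y ∈ piFinset fun _ : Fin t => B,
          ∏ j, ∏ i, R (x i) (y j) := by
  calc (𝔼 a ∈ A, 𝔼 b ∈ B, R a b) ^ (s * t)
      = ((𝔼 b ∈ B, 𝔼 a ∈ A, R a b) ^ s) ^ t := by rw [expect_comm, pow_mul]
    _ ≤ (𝔼 b ∈ B, (𝔼 a ∈ A, R a b) ^ s) ^ t := by
        have nonneg (b) : 0 ≤ 𝔼 a ∈ A, R a b := expect_nonneg fun a _ => hR a b
        gcongr
        · exact pow_nonneg (expect_nonneg fun b _ => nonneg b) s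
        · exact pow_expect_le_expect_pow hB (fun b _ => nonneg b) s
    _ = (𝔼 x ∈ piFinset fun _ : Fin s => A, 𝔼 b ∈ B, ∏ i, R (x i) b) ^ t := by
        congr 1
        simp_rw [expect_pow]
        exact expect_comm _ _ _
    _ ≤ 𝔼 x ∈ piFinset fun _ : Fin s => A, (𝔼 b ∈ B, ∏ i, R (x i) b) ^ t :=
        pow_expect_le_expect_pow (piFinset_nonempty.2 fun _ => hA)
          (fun x _ => expect_nonneg fun b _ => prod_nonneg fun i _ => hR _ _) t
    _ = _ := by simp_rw [expect_pow]

variable [Fintype ι] [DecidableEq ι]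

lemma expect_prod_piFinset {α : ι → Type*} (A : ∀ k, Finset (α k)) (h : ∀ k, α k → ℝ) :
    𝔼 x ∈ piFinset A, ∏ k, h k (x k) = ∏ k, 𝔼 a ∈ A k, h k a := by
  simp_rw [expect_eq_sum_div_card, prod_div_distrib, prod_univ_sum, card_piFinset, Nat.cast_prod]

lemma expect_prod_columns (A : ι → Finset κ) (s : ℕ) (h : ι → (Fin s → κ) → ℝ) :
    𝔼 x ∈ piFinset fun _ : Fin s => piFinset A, ∏ k, h k (fun i => x i k)
      = ∏ k, 𝔼 c ∈ piFinset fun _ : Fin s => A k, h k c := by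
  rw [← expect_prod_piFinset]
  refine expect_equiv (Equiv.piComm _) (fun x => ?_) fun x _ => rfl
  simp only [mem_piFinset, Equiv.piComm_apply, Function.swap]
  exact forall_comm

lemma expect_prod_one_sub_pattern [DecidableEq κ] {A : ι → Finset κ}
    (hA : ∀ k, (A k).Nonempty) {s t : ℕ} {T : Finset ι} {p : ι → Fin s → κ} {q : ι → Fin t → κ}
    (hp : ∀ k ∈ T, ∀ i, p k i ∈ A k) (hq : ∀ k ∈ T, ∀ j, q k j ∈ A k) :
    𝔼 x ∈ piFinset fun _ : Fin s => piFinset A, 𝔼 y ∈ piFinset fun _ : Fin t => piFinset A,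
        ∏ k ∈ T, (1 - (if (fun i => x i k) = p k then 1 else 0)
          * (if (fun j => y j k) = q k then 1 else 0) : ℝ)
      = ∏ k ∈ T, (1 - ((#(A k) : ℝ) ^ (s + t))⁻¹) := by
  let h (k : ι) (c : Fin s → κ) (d : Fin t → κ) : ℝ :=
    if k ∈ T then 1 - (if c = p k then 1 else 0) * (if d = q k then 1 else 0) else 1
  have expect_h (k) : 𝔼 c ∈ piFinset fun _ : Fin s => A k, 𝔼 d ∈ piFinset fun _ : Fin t => A k,
      h k c d = if k ∈ T then 1 - ((#(A k) : ℝ) ^ (s + t))⁻¹ else 1 := by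
    have nonempty (r : ℕ) : (piFinset fun _ : Fin r => A k).Nonempty :=
      piFinset_nonempty.2 fun _ => hA k
    have expect_eq {r : ℕ} {c : Fin r → κ} (hc : ∀ i, c i ∈ A k) :
        𝔼 d ∈ piFinset fun _ : Fin r => A k, (if d = c then 1 else 0 : ℝ)
          = ((#(A k) : ℝ) ^ r)⁻¹ := by
      rw [expect_eq_sum_div_card, sum_ite_eq', if_pos (mem_piFinset.2 hc),
        Fintype.card_piFinset_const, Nat.cast_pow, one_div]
    unfold h
    split_ifs with hk
    · simp_rw [expect_sub_distrib, ← expect_mul_expect, expect_const (nonempty _),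
        expect_eq (hp k hk), expect_eq (hq k hk), pow_add, mul_inv]
    · simp_rw [expect_const (nonempty _)]
  calc _ = 𝔼 x ∈ piFinset fun _ : Fin s => piFinset A, 𝔼 y ∈ piFinset fun _ : Fin t => piFinset A,
          ∏ k, h k (fun i => x i k) (fun j => y j k) := by
        simp_rw [h, prod_ite_mem, univ_inter]
    _ = ∏ k, if k ∈ T then 1 - ((#(A k) : ℝ) ^ (s + t))⁻¹ else 1 := by
        simp_rw [fun x : Fin s → ι → κ => expect_prod_columns A t fun k => h k fun i => x i k]
        rw [expect_prod_columns A s fun k c => 𝔼 d ∈ piFinset fun _ : Fin t => A k, h k c d]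
        simp_rw [expect_h]
    _ = _ := by rw [prod_ite_mem, univ_inter]

/-- Distinct coordinates of a random point of a box are independent, so the forbidden pattern is
avoided on all of `T` only with exponentially small probability. -/
theorem pow_expect_expect_le_prod_of_forbidden {A : ι → Finset κ} (hA : ∀ k, (A k).Nonempty)
    {R : (ι → κ) → (ι → κ) → ℝ} (hR : ∀ a b, R a b ∈ Set.Icc 0 1) {s t : ℕ} {T : Finset ι}
    {p : ι → Fin s → κ} {q : ι → Fin t → κ} (hp : ∀ k ∈ T, ∀ i, p k i ∈ A k)
    (hq : ∀ k ∈ T, ∀ j, q k j ∈ A k)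
    (forbidden : ∀ k ∈ T, ∀ (x : Fin s → ι → κ) (y : Fin t → ι → κ),
      (∀ i, x i k = p k i) → (∀ j, y j k = q k j) → ∃ i j, R (x i) (y j) = 0) :
    (𝔼 a ∈ piFinset A, 𝔼 b ∈ piFinset A, R a b) ^ (s * t)
      ≤ ∏ k ∈ T, (1 - ((#(A k) : ℝ) ^ (s + t))⁻¹) := by
  classical
  rw [← expect_prod_one_sub_pattern hA hp hq]
  refine (pow_expect_expect_le_expect_prod (piFinset_nonempty.2 hA) (piFinset_nonempty.2 hA)
    (fun a b => (hR a b).1) s t).trans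
    (expect_le_expect fun x _ => expect_le_expect fun y _ => ?_)
  by_cases pattern : ∃ k ∈ T, (fun i => x i k) = p k ∧ (fun j => y j k) = q k
  · obtain ⟨k, hkT, hx, hy⟩ := pattern
    obtain ⟨i, j, hij⟩ := forbidden k hkT x y (congrFun hx) (congrFun hy)
    rw [prod_eq_zero (mem_univ j) (prod_eq_zero (mem_univ i) hij)]
    refine prod_nonneg fun k _ => ?_
    split_ifs <;> norm_num
  · push Not at pattern
    refine (prod_le_one (fun j _ => prod_nonneg fun i _ => (hR _ _).1) fun j _ =>
      prod_le_one (fun i _ => (hR _ _).1) fun i _ => (hR _ _).2).trans_eq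
      (prod_eq_one fun k hk => ?_).symm
    by_cases hx : (fun i => x i k) = p k
    · rw [if_neg (pattern k hk hx), mul_zero, sub_zero]
    · rw [if_neg hx, zero_mul, sub_zero]

end Counting

section MagicSquare

open Fintype (piFinset card_piFinset piFinset_nonempty)
open scoped BigOperators Pointwise

/-- The Mermin–Peres magic square
```
X₁    X₂    X₁X₂
Z₂    Z₁    Z₁Z₂
X₁Z₂  X₂Z₁  Y₁Y₂
```
of two-qubit Pauli operators. -/
def magicSquare : Fin 3 → Fin 3 → PV 2 :=
  ![![(![1, 0], ![0, 0]), (![0, 1], ![0, 0]), (![1, 1], ![0, 0])],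
    ![(![0, 0], ![0, 1]), (![0, 0], ![1, 0]), (![0, 0], ![1, 1])],
    ![(![1, 0], ![0, 1]), (![0, 1], ![1, 0]), (![1, 1], ![1, 1])]]

/-- The three rows (`Sum.inl`) and three columns (`Sum.inr`) of the magic square. -/
abbrev MagicLine := Fin 3 ⊕ Fin 3

namespace MagicLine

/-- The cells on a line of the magic square. -/
def cell : MagicLine → Fin 3 → PV 2 :=
  Sum.elim magicSquare fun j i => magicSquare i j

lemma cell_add_cell : ∀ c i j, cell c i + cell c j = 0 ∨ ∃ k, cell c k = cell c i + cell c j := by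
  decide

/-- The maximal isotropic subspace of two-qubit Pauli operators on a line of the magic square. -/
def context (c : MagicLine) : Submodule F2 (PV 2) where
  carrier := {p | p = 0 ∨ ∃ i, cell c i = p}
  zero_mem' := Or.inl rfl
  add_mem' := by
    rintro p q (rfl | ⟨i, rfl⟩) (rfl | ⟨j, rfl⟩)
    · exact Or.inl (add_zero 0)
    · exact Or.inr ⟨j, (zero_add _).symm⟩
    · exact Or.inr ⟨i, (add_zero _).symm⟩
    · exact cell_add_cell c i j
  smul_mem' a p hp := by
    rcases eq_or_ne a 0 with rfl | ha
    · exact Or.inl (zero_smul F2 p)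
    · rwa [F2.eq_one_of_ne_zero ha, one_smul]

lemma mem_context {c : MagicLine} {p : PV 2} : p ∈ context c ↔ p = 0 ∨ ∃ i, cell c i = p :=
  Iff.rfl

instance (c : MagicLine) : DecidablePred (· ∈ context c) :=
  fun _ => decidable_of_iff' _ mem_context

lemma cell_mem_context (c : MagicLine) (i : Fin 3) : cell c i ∈ context c := Or.inr ⟨i, rfl⟩

lemma context_mem_Lset (c : MagicLine) : context c ∈ Lset 2 2 := by
  have symp_cell : ∀ c i j, symp (cell c i) (cell c j) = 0 := by decide
  have card_context : ∀ c, Fintype.card (context c) = 2 ^ 2 := by decide +kernel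
  refine ⟨?_, ?_⟩
  · rintro p (rfl | ⟨i, rfl⟩) q (rfl | ⟨j, rfl⟩)
    · simp [← sympForm_apply]
    · simp [← sympForm_apply]
    · simp [← sympForm_apply]
    · exact symp_cell c i j
  · have := Module.card_eq_pow_finrank (K := F2) (V := context c)
    rw [card_context, ZMod.card] at this
    exact (Nat.pow_right_injective le_rfl this).symm

/-- The lines whose context contains `p`. -/
def through (p : PV 2) : Finset MagicLine := {c | p ∈ context c}

lemma sum_card_through_sq_mul_ite (a : ℝ) :
    ∑ p, (#(through p) : ℝ) ^ 2 * (if through p = univ then a else 1) = 36 * a + 36 := by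
  have through_zero : through 0 = univ := by decide
  have through_ne_univ : ∀ p ≠ 0, through p ≠ univ := by decide +kernel
  have nonzero_sum : ∑ p with p ≠ 0, #(through p) ^ 2 = 36 := by decide +kernel
  have nonzero_sum_mul_ite :
      ∑ p with p ≠ 0, (#(through p) : ℝ) ^ 2 * (if through p = univ then a else 1) = 36 := by
    refine .trans ?_ (congrArg Nat.cast nonzero_sum)
    rw [Nat.cast_sum]
    refine sum_congr rfl fun p hp => ?_
    rw [if_neg (through_ne_univ p (mem_filter.1 hp).2), mul_one, Nat.cast_pow]
  rw [← add_sum_erase univ _ (mem_univ 0), ← filter_ne', nonzero_sum_mul_ite, through_zero,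
    if_pos rfl, card_univ, Fintype.card_sum, Fintype.card_fin]
  norm_num

end MagicLine

/-- A vector of `m * k` qubits as `m` blocks of `k` qubits. -/
def blocks (m k : ℕ) : PV (m * k) ≃ₗ[F2] (Fin m → PV k) where
  toFun v i := (fun j => v.1 (finProdFinEquiv (i, j)), fun j => v.2 (finProdFinEquiv (i, j)))
  invFun w := (fun l => (w l.divNat).1 l.modNat, fun l => (w l.divNat).2 l.modNat)
  map_add' _ _ := rfl
  map_smul' _ _ := rfl
  left_inv v := by
    ext l
    · exact congrArg v.1 (finProdFinEquiv.apply_symm_apply l)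
    · exact congrArg v.2 (finProdFinEquiv.apply_symm_apply l)
  right_inv w := by
    ext i j
    · exact congrArg (fun l => (w l.1).1 l.2) (finProdFinEquiv.symm_apply_apply (i, j))
    · exact congrArg (fun l => (w l.1).2 l.2) (finProdFinEquiv.symm_apply_apply (i, j))

variable {m k : ℕ}

lemma symp_eq_sum_blocks (u v : PV (m * k)) :
    symp u v = ∑ i, symp (blocks m k u i) (blocks m k v i) := by
  simp only [symp, sum_add_distrib, ← finProdFinEquiv.sum_comp, Fintype.sum_prod_type]
  rfl

/-- The direct sum of the subspaces `L i` of the individual blocks. -/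
def blockSum (L : Fin m → Submodule F2 (PV k)) : Submodule F2 (PV (m * k)) :=
  (Submodule.pi Set.univ L).comap (blocks m k).toLinearMap

lemma mem_blockSum {L : Fin m → Submodule F2 (PV k)} {v : PV (m * k)} :
    v ∈ blockSum L ↔ ∀ i, blocks m k v i ∈ L i := by
  simp [blockSum, Submodule.mem_pi]

lemma blockSum_mem_Lset {L : Fin m → Submodule F2 (PV k)} {r : ℕ} (hL : ∀ i, L i ∈ Lset k r) :
    blockSum L ∈ Lset (m * k) (m * r) := by
  refine ⟨fun u hu v hv => ?_, ?_⟩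
  · rw [symp_eq_sum_blocks]
    exact sum_eq_zero fun i _ =>
      (hL i).1 _ (mem_blockSum.1 hu i) _ (mem_blockSum.1 hv i)
  · have card (i) : Nat.card (L i) = 2 ^ r := by
      rw [Module.natCard_eq_pow_finrank (K := F2), (hL i).2, Nat.card_zmod]
    have card_blockSum : Nat.card (blockSum L) = ∏ i, Nat.card (L i) := by
      rw [← Nat.card_pi]
      exact Nat.card_congr (((blocks m k).toEquiv.subtypeEquiv fun _ => mem_blockSum).trans
        Equiv.subtypePiEquivPi)
    rw [Module.natCard_eq_pow_finrank (K := F2), Nat.card_zmod, prod_congr rfl fun i _ => card i,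
      prod_const, card_univ, Fintype.card_fin, ← pow_mul] at card_blockSum
    rw [Nat.pow_right_injective le_rfl card_blockSum, mul_comm]

/-- The direct sum of one magic-square context in each block. -/
def blockContext (c : Fin m → MagicLine) : Submodule F2 (PV (m * 2)) :=
  blockSum fun i => (c i).context

lemma blockContext_mem_Lset (c : Fin m → MagicLine) : blockContext c ∈ Lset (m * 2) (m * 2) :=
  blockSum_mem_Lset fun i => (c i).context_mem_Lset

lemma mem_blockContext {c : Fin m → MagicLine} {v : PV (m * 2)} :
    v ∈ blockContext c ↔ c ∈ piFinset fun i => MagicLine.through (blocks m 2 v i) := by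
  simp [blockContext, mem_blockSum, MagicLine.through]

lemma blocks_symm_single_mem_blockContext {c : Fin m → MagicLine} {i : Fin m} {p : PV 2}
    (hp : p ∈ (c i).context) : (blocks m 2).symm (Pi.single i p) ∈ blockContext c := by
  refine mem_blockSum.2 fun j => ?_
  rw [LinearEquiv.apply_symm_apply]
  rcases eq_or_ne j i with rfl | hj
  · rwa [Pi.single_eq_same]
  · rw [Pi.single_eq_of_ne hj]
    exact zero_mem _

variable {f : (S : Submodule F2 (PV (m * 2))) → (S → F2)}

lemma exists_not_consistentOn_blockContext (hf : ∀ S ∈ Lset (m * 2) (m * 2), IsOutcome S (f S))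
    (σ : symplecticGroup (m * 2)) (k : Fin m) {x y : Fin 3 → Fin m → MagicLine}
    (hx : ∀ i, x i k = Sum.inl i) (hy : ∀ j, y j k = Sum.inr j) :
    ∃ i j, ¬ConsistentOn (f (σ • blockContext (x i))) (f (σ • blockContext (y j))) := by
  have smul_context_mem (c : Fin m → MagicLine) :
      σ • blockContext c ∈ Lset (m * 2) (m * 2) := smul_mem_Lset σ (blockContext_mem_Lset c)
  let embed (p : PV 2) : PV (m * 2) := σ • (blocks m 2).symm (Pi.single k p)
  have embed_add (p q) : embed p + embed q = embed (p + q) := by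
    simp only [embed, Pi.single_add, map_add, smul_add]
  have symp_embed (p q) : symp (embed p) (embed q) = symp p q := by
    rw [symp_smul_smul, symp_eq_sum_blocks, LinearEquiv.apply_symm_apply,
      LinearEquiv.apply_symm_apply, sum_eq_single k]
    · rw [Pi.single_eq_same, Pi.single_eq_same]
    · rintro i - hi
      rw [Pi.single_eq_of_ne hi, ← sympForm_apply, map_zero, LinearMap.zero_apply]
    · simp
  have embed_mem {c : Fin m → MagicLine} {p : PV 2} (hp : p ∈ (c k).context) :
      embed p ∈ σ • blockContext c :=
    smul_mem_pointwise_smul_iff.2 (blocks_symm_single_mem_blockContext hp)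
  refine exists_not_consistentOn_of_magic_square (u := fun i j => embed (magicSquare i j))
    (fun i => (smul_context_mem (x i)).1) (fun j => (smul_context_mem (y j)).1)
    (fun i => hf _ (smul_context_mem (x i))) (fun j => hf _ (smul_context_mem (y j)))
    (fun i j => embed_mem ?_) (fun i j => embed_mem ?_) (fun i => ?_) (fun j => ?_) ?_
  · rw [hx]
    exact MagicLine.cell_mem_context (Sum.inl i) j
  · rw [hy]
    exact MagicLine.cell_mem_context (Sum.inr j) i
  · rw [embed_add]
    exact congrArg embed (by decide +revert)
  · rw [embed_add]
    exact congrArg embed (by decide +revert)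
  · rw [symp_embed]
    decide

lemma sum_prod_blocks (φ : PV k → ℝ) :
    ∑ v : PV (m * k), ∏ i, φ (blocks m k v i) = (∑ p, φ p) ^ m := by
  rw [Fintype.sum_pow]
  exact Equiv.sum_comp (blocks m k).toEquiv fun w => ∏ i, φ (w i)

open Classical in
lemma filter_mem_blockContext (v : PV (m * 2)) :
    ({c : Fin m → MagicLine | v ∈ blockContext c} : Finset _)
      = piFinset fun i => MagicLine.through (blocks m 2 v i) := by
  ext c
  rw [mem_filter_univ, mem_blockContext]

open Classical in
/-- The rows against the columns of a square are a forbidden pattern for consistency; by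
Bernoulli's inequality `1 - 6⁻¹ ^ (3 + 3) ≤ (1 - 4 / 6 ^ 8) ^ (3 * 3)`. -/
lemma expect_expect_consistentOn_le (hf : ∀ S ∈ Lset (m * 2) (m * 2), IsOutcome S (f S))
    (σ : symplecticGroup (m * 2)) {A : Fin m → Finset MagicLine} (hA : ∀ i, (A i).Nonempty) :
    𝔼 c ∈ piFinset A, 𝔼 d ∈ piFinset A,
        (if ConsistentOn (f (σ • blockContext c)) (f (σ • blockContext d)) then 1 else 0 : ℝ)
      ≤ ∏ i, if A i = univ then 1 - 4 * (6 ^ 8)⁻¹ else 1 := by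
  have bound := pow_expect_expect_le_prod_of_forbidden hA (T := {i | A i = univ})
    (R := fun c d =>
      if ConsistentOn (f (σ • blockContext c)) (f (σ • blockContext d)) then 1 else 0)
    (p := fun _ => Sum.inl) (q := fun _ => Sum.inr) (fun c d => by split_ifs <;> simp)
    (fun i hi _ => (mem_filter.1 hi).2 ▸ mem_univ _)
    (fun i hi _ => (mem_filter.1 hi).2 ▸ mem_univ _) fun k _ x y hx hy => by
      obtain ⟨i, j, hij⟩ := exists_not_consistentOn_blockContext hf σ k hx hy
      exact ⟨i, j, if_neg hij⟩
  rw [prod_filter] at bound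
  refine le_of_pow_le_pow_left₀ (n := 3 * 3) (by norm_num)
    (prod_nonneg fun i _ => by split_ifs <;> norm_num) (bound.trans ?_)
  rw [← prod_pow]
  gcongr with i
  · intro i _
    split_ifs with h
    · rw [h, card_univ, Fintype.card_sum, Fintype.card_fin]
      norm_num
    · norm_num
  · split_ifs with h
    · rw [h, card_univ, Fintype.card_sum, Fintype.card_fin]
      norm_num
    · norm_num

open Classical in
lemma sum_sum_consistentOn_le (hf : ∀ S ∈ Lset (m * 2) (m * 2), IsOutcome S (f S))
    (σ : symplecticGroup (m * 2)) (A : Fin m → Finset MagicLine) :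
    ∑ c ∈ piFinset A, ∑ d ∈ piFinset A,
        (if ConsistentOn (f (σ • blockContext c)) (f (σ • blockContext d)) then 1 else 0 : ℝ)
      ≤ ∏ i, (#(A i) : ℝ) ^ 2 * (if A i = univ then 1 - 4 * (6 ^ 8)⁻¹ else 1) := by
  by_cases hA : ∀ i, (A i).Nonempty
  · simp_rw [← card_mul_expect (piFinset A), ← mul_expect, ← mul_assoc]
    rw [prod_mul_distrib, prod_pow, card_piFinset, Nat.cast_prod, ← sq]
    gcongr
    exact expect_expect_consistentOn_le hf σ hA
  · rw [← piFinset_nonempty, not_nonempty_iff_eq_empty] at hA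
    rw [hA, sum_empty]
    refine prod_nonneg fun i _ => mul_nonneg (sq_nonneg _) ?_
    split_ifs <;> norm_num

theorem energy_mul_le (hf : ∀ S ∈ Lset (m * 2) (m * 2), IsOutcome S (f S)) :
    energy f * (72 ^ m - 36 ^ m) ≤ (36 * (1 - 4 * (6 ^ 8)⁻¹) + 36) ^ m := by
  classical
  have sum_sq : ∑ v with v ≠ 0, (#{c : Fin m → MagicLine | v ∈ blockContext c} : ℝ) ^ 2
      = 72 ^ m - 36 ^ m := by
    have total : ∑ v, (#{c : Fin m → MagicLine | v ∈ blockContext c} : ℝ) ^ 2 = 72 ^ m := by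
      have local_sum := MagicLine.sum_card_through_sq_mul_ite 1
      simp_rw [ite_self, mul_one] at local_sum
      simp_rw [filter_mem_blockContext, card_piFinset, Nat.cast_prod, ← prod_pow]
      rw [sum_prod_blocks fun p => (#(MagicLine.through p) : ℝ) ^ 2, local_sum]
      norm_num
    have zero_term : (#{c : Fin m → MagicLine | 0 ∈ blockContext c} : ℝ) ^ 2 = 36 ^ m := by
      simp_rw [zero_mem, filter_true, card_univ, Fintype.card_fun, Fintype.card_sum,
        Fintype.card_fin]
      rw [Nat.cast_pow, ← pow_mul, mul_comm m 2, pow_mul]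
      norm_num
    rw [← total, ← zero_term, filter_ne', sum_erase_eq_sub (mem_univ _)]
  rw [← sum_sq]
  refine (energy_mul_sum_card_sq_le f blockContext_mem_Lset hf).trans
    (expect_le univ_nonempty fun σ _ => ?_)
  simp_rw [filter_mem_blockContext]
  rw [← MagicLine.sum_card_through_sq_mul_ite, ← sum_prod_blocks]
  exact sum_le_sum fun v _ => sum_sum_consistentOn_le hf σ _

theorem energy_le (hm : m ≠ 0) (hf : ∀ S ∈ Lset (m * 2) (m * 2), IsOutcome S (f S)) :
    energy f ≤ 2 * (1 - (6 ^ 8)⁻¹) ^ (m * 2) := by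
  have half_le : (72 : ℝ) ^ m ≤ 2 * (72 ^ m - 36 ^ m) := by
    have two_le : (2 : ℝ) ≤ 2 ^ m := le_self_pow₀ one_le_two hm
    rw [show (72 : ℝ) = 2 * 36 by norm_num, mul_pow]
    nlinarith [pow_pos (show (0 : ℝ) < 36 by norm_num) m]
  have energy_nonneg : 0 ≤ energy f := expect_nonneg fun v _ => sq_nonneg _
  refine le_of_mul_le_mul_right ?_ (show (0 : ℝ) < 72 ^ m by positivity)
  calc energy f * 72 ^ m ≤ 2 * (energy f * (72 ^ m - 36 ^ m)) := by
        rw [mul_left_comm]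
        gcongr
    _ ≤ 2 * (36 * (1 - 4 * (6 ^ 8)⁻¹) + 36) ^ m := by
        gcongr
        exact energy_mul_le hf
    _ ≤ 2 * (72 * (1 - (6 ^ 8)⁻¹) ^ 2) ^ m := by
        gcongr 2 * ?_ ^ m
        norm_num
    _ = 2 * (1 - (6 ^ 8)⁻¹) ^ (m * 2) * 72 ^ m := by
        rw [mul_pow 72, ← pow_mul, mul_comm 2 m, mul_comm (72 ^ m), mul_assoc]

end MagicSquare

/-- **Pauli agreement game.** There is `ε ∈ (0,1)` such that for every even `n ≥ 2`, the
maximum of `P(f,g)` over all pairs of outcome families lies between `1/2` and `1/2 + ε^n`. -/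
theorem pauli_agreement_game_value :
    ∃ ε : ℝ, ε ∈ Set.Ioo (0 : ℝ) 1 ∧ ∀ n : ℕ, Even n → 2 ≤ n →
      (∃ f g : (S : Submodule F2 (PV n)) → (S → F2),
          (∀ S ∈ Lset n n, IsOutcome S (f S)) ∧
          (∀ S ∈ Lset n n, IsOutcome S (g S)) ∧
          (1 / 2 : ℝ) ≤ agreeProb n f g) ∧
      (∀ f g : (S : Submodule F2 (PV n)) → (S → F2),
          (∀ S ∈ Lset n n, IsOutcome S (f S)) →
          (∀ S ∈ Lset n n, IsOutcome S (g S)) →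
          agreeProb n f g ≤ 1 / 2 + ε ^ n) := by
  refine ⟨1 - (6 ^ 8)⁻¹, by norm_num, fun n n_even two_le => ⟨?_, fun f g hf hg => ?_⟩⟩
  · have exists_outcome (S : Submodule F2 (PV n)) :
        ∃ f : S → F2, S ∈ Lset n n → IsOutcome S f := by
      by_cases hS : S ∈ Lset n n
      · exact hS.1.exists_isOutcome.imp fun _ hf _ => hf
      · exact ⟨0, fun h => absurd h hS⟩
    choose f hf using exists_outcome
    exact ⟨f, f, hf, hf, half_le_agreeProb_self f (by lia)⟩
  · obtain ⟨m, rfl⟩ := dvd_iff_exists_eq_mul_left.1 n_even.two_dvd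
    have hm : m ≠ 0 := by lia
    linarith [agreeProb_le_energy f g (mul_ne_zero hm two_ne_zero), energy_le hm hf,
      energy_le hm hg]
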